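/- arXiv:2304.12835 — 4 statements merged into one kernel-verified Lean document; each statement's English description precedes it below -/
import Mathlib

section
/- Let Γ ⊂ ℝⁿ be an open symmetric convex cone as below, let f satisfy the concavity, symmetry, smoothness assumptions and condition (★), and let ϱ be a real constant with ϱ ≠ 0 and ϱ < ϱ_Γ. Define f̃ on Γ̃ by f̃(λ) = f(μ) where λ = T_ϱ(μ) (that is, f̃ = f ∘ T_ϱ⁻¹). Then f̃ is smooth, symmetric and concave on Γ̃, and f̃ is uniformly elliptic on Γ̃: there exists a uniform constant θ > 0 such that ∂f̃/∂λᵢ(λ) ≥ θ · Σⱼ₌₁ⁿ ∂f̃/∂λⱼ(λ) > 0 for all λ ∈ Γ̃ and all 1 ≤ i ≤ n. -/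
/-!
Write `D` for the derivative of `f` at a point `μ ∈ Γ`. Concavity gives
`f (t • ν) ≤ f μ + t * D ν - D μ`, and `f (t • ν) > f μ` for large `t` by (★), so
`t * D ν > D μ`. Taking `ν = μ` yields `D μ > 0`, whence `D ν > 0` for *every* `ν ∈ Γ`
(`fderiv_pos`).

Since `ϱ < ϱ_Γ`, the vector `(1,…,1,1-ϱ)` is in the open cone `Γ` (`rhoVec_mem`), and therefore
so is `(1,…,1,1-ϱ) - c • (1,…,1)` for some `c > 0`, with all its permutations. Up to the factor
`(n-ϱ)⁻¹`, the partial derivatives of `f ∘ T_ϱ⁻¹` are the values of `D` at the permutations of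
`(1,…,1,1-ϱ)`, and their sum is `D (1,…,1)`. Positivity of `D` on `Γ` thus gives uniform
ellipticity with `θ = c / (n-ϱ)`.
-/

open Finset

noncomputable section

/-- Γ is an open symmetric convex cone in ℝⁿ with vertex at the origin, nonempty boundary,
containing the positive orthant. -/
def IsAdmissibleCone {n : ℕ} (Γ : Set (Fin n → ℝ)) : Prop :=
  IsOpen Γ ∧ Convex ℝ Γ ∧
    (∀ x ∈ Γ, ∀ t : ℝ, 0 < t → t • x ∈ Γ) ∧
    (∀ x ∈ Γ, ∀ σ : Equiv.Perm (Fin n), x ∘ σ ∈ Γ) ∧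
    {x : Fin n → ℝ | ∀ i, 0 < x i} ⊆ Γ ∧
    (frontier Γ).Nonempty

/-- The vector `(0,…,0,1,…,1)` with `k` zeros followed by `n-k` ones. -/
def zeroOneVec (n k : ℕ) : Fin n → ℝ := fun i => if (i : ℕ) < k then 0 else 1

/-- The vector `(0,…,0,1)`. -/
def eLast (n : ℕ) : Fin n → ℝ := fun i => if (i : ℕ) = n - 1 then 1 else 0

/-- The vector `(1,…,1,1-ϱ)`. -/
def rhoVec (n : ℕ) (ϱ : ℝ) : Fin n → ℝ := fun i => if (i : ℕ) = n - 1 then 1 - ϱ else 1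

/-- The linear map `T_ϱ` sending `μ` to `λ` with `λᵢ = ϱ⁻¹ (∑ⱼ μⱼ - (n-ϱ) μᵢ)`. -/
def Tmap (n : ℕ) (ϱ : ℝ) (μ : Fin n → ℝ) : Fin n → ℝ :=
  fun i => ϱ⁻¹ * ((∑ j, μ j) - ((n : ℝ) - ϱ) * μ i)

/-- The inverse map of `T_ϱ`, sending `λ` to `μ` with `μᵢ = (n-ϱ)⁻¹ (∑ⱼ λⱼ - ϱ λᵢ)`. -/
def TmapInv (n : ℕ) (ϱ : ℝ) (lam : Fin n → ℝ) : Fin n → ℝ :=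
  fun i => ((n : ℝ) - ϱ)⁻¹ * ((∑ j, lam j) - ϱ * lam i)

/-- `f` is symmetric (invariant under permutations of coordinates) on `Γ`. -/
def IsSymmetricOn {n : ℕ} (f : (Fin n → ℝ) → ℝ) (Γ : Set (Fin n → ℝ)) : Prop :=
  ∀ x ∈ Γ, ∀ σ : Equiv.Perm (Fin n), f (x ∘ σ) = f x

/-- Condition (★): for all `λ, μ ∈ Γ`, `lim_{t→∞} f(tλ) > f(μ)`. -/
def CondStar {n : ℕ} (f : (Fin n → ℝ) → ℝ) (Γ : Set (Fin n → ℝ)) : Prop :=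
  ∀ lam ∈ Γ, ∀ mu ∈ Γ, ∃ T : ℝ, 0 < T ∧ ∀ t : ℝ, T ≤ t → f mu < f (t • lam)

/-- The partial derivative `fᵢ(λ) = ∂f/∂λᵢ (λ)`. -/
def partialDeriv {n : ℕ} (f : (Fin n → ℝ) → ℝ) (lam : Fin n → ℝ) (i : Fin n) : ℝ :=
  fderiv ℝ f lam (Pi.single i 1)

/-- Supporting hyperplane inequality for a differentiable concave function. -/
lemma concave_le_fderiv {E : Type*} [NormedAddCommGroup E] [NormedSpace ℝ E] {Γ : Set E}
    {f : E → ℝ} (hconc : ConcaveOn ℝ Γ f) {x y : E} (hx : x ∈ Γ) (hy : y ∈ Γ)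
    (hd : DifferentiableAt ℝ f x) : f y ≤ f x + fderiv ℝ f x (y - x) := by
  have hg := hconc.comp_affineMap (AffineMap.lineMap (k := ℝ) x y)
  have hder : HasDerivAt (f ∘ (AffineMap.lineMap (k := ℝ) x y)) (fderiv ℝ f x (y - x)) 0 := by
    have h1 : HasDerivAt (AffineMap.lineMap (k := ℝ) x y) (y - x) 0 :=
      AffineMap.hasDerivAt_lineMap
    have h2 : HasFDerivAt f (fderiv ℝ f x) ((AffineMap.lineMap (k := ℝ) x y) 0) := by
      simpa using hd.hasFDerivAt
    exact h2.comp_hasDerivAt 0 h1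
  have h := hg.slope_le_of_hasDerivAt (x := 0) (y := 1) (by simpa using hx) (by simpa using hy)
    one_pos hder
  simp [slope_def_field] at h
  simpa [add_comm] using h

/-- Under (★), the derivative of `f` at any point of the cone is positive on the whole cone. -/
lemma fderiv_pos {n : ℕ} {Γ : Set (Fin n → ℝ)}
    (hcone : ∀ x ∈ Γ, ∀ t : ℝ, 0 < t → t • x ∈ Γ) {f : (Fin n → ℝ) → ℝ}
    (hconc : ConcaveOn ℝ Γ f) (hstar : CondStar f Γ) {x y : Fin n → ℝ} (hx : x ∈ Γ) (hy : y ∈ Γ)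
    (hd : DifferentiableAt ℝ f x) : 0 < fderiv ℝ f x y := by
  have key : ∀ z ∈ Γ, ∃ t : ℝ, 1 < t ∧ fderiv ℝ f x x < t * fderiv ℝ f x z := by
    intro z hz
    obtain ⟨T, hT, h⟩ := hstar z hz x hx
    have h1 := h (max T 2) (le_max_left _ _)
    have h3 : (2 : ℝ) ≤ max T 2 := le_max_right _ _
    have h2 := concave_le_fderiv hconc hx (hcone z hz (max T 2) (by linarith)) hd
    rw [map_sub, map_smul, smul_eq_mul] at h2
    exact ⟨max T 2, by linarith, by linarith⟩
  have hxx : 0 < fderiv ℝ f x x := by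
    obtain ⟨t, ht, h⟩ := key x hx
    by_contra! hneg
    nlinarith
  obtain ⟨t, ht, h⟩ := key y hy
  by_contra! hneg
  nlinarith

/-- `(1,…,1,1-ϱ)` lies on an open segment joining the boundary point `(1,…,1,1-ϱ_Γ)` to a point
of the positive orthant, so it is an interior point of `Γ`. -/
lemma rhoVec_mem {n : ℕ} {Γ : Set (Fin n → ℝ)} (hΓ : IsAdmissibleCone Γ) {ϱΓ ϱ : ℝ}
    (hϱΓ : rhoVec n ϱΓ ∈ frontier Γ) (hϱ : ϱ < ϱΓ) : rhoVec n ϱ ∈ Γ := by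
  obtain ⟨hopen, hconv, -, -, hpos, -⟩ := hΓ
  set s : ℝ := min ϱ 0 - 1 with hs
  have hsϱ : s < ϱ := by linarith [min_le_left ϱ 0]
  have hs0 : s < 0 := by linarith [min_le_right ϱ 0]
  have hsΓ : rhoVec n s ∈ interior Γ := by
    rw [hopen.interior_eq]
    apply hpos
    intro i
    simp only [rhoVec]
    split_ifs <;> linarith
  apply interior_subset
  apply hconv.openSegment_interior_closure_subset_interior hsΓ (frontier_subset_closure hϱΓ)
  have hne : ϱΓ - s ≠ 0 := by linarith
  refine ⟨(ϱΓ - ϱ) / (ϱΓ - s), (ϱ - s) / (ϱΓ - s), div_pos (by linarith) (by linarith),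
    div_pos (by linarith) (by linarith), by field_simp; ring, ?_⟩
  ext i
  simp only [rhoVec, Pi.add_apply, Pi.smul_apply, smul_eq_mul]
  split_ifs <;> field_simp <;> ring

/-- The map `T_ϱ⁻¹` as a continuous linear map. -/
def TmapInvCLM (n : ℕ) (ϱ : ℝ) : (Fin n → ℝ) →L[ℝ] (Fin n → ℝ) :=
  LinearMap.toContinuousLinearMap
    { toFun := TmapInv n ϱ
      map_add' := by
        intro x y; ext i; simp only [TmapInv, Pi.add_apply, Finset.sum_add_distrib]; ring
      map_smul' := by
        intro c x; ext i
        simp only [TmapInv, Pi.smul_apply, smul_eq_mul, ← Finset.mul_sum, RingHom.id_apply]; ring }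

lemma TmapInvCLM_apply (n : ℕ) (ϱ : ℝ) (x : Fin n → ℝ) : TmapInvCLM n ϱ x = TmapInv n ϱ x := rfl

lemma Tmap_isLinearMap (n : ℕ) (ϱ : ℝ) : IsLinearMap ℝ (Tmap n ϱ) where
  map_add := by
    intro x y; ext i; simp only [Tmap, Pi.add_apply, Finset.sum_add_distrib]; ring
  map_smul := by
    intro c x; ext i
    simp only [Tmap, Pi.smul_apply, smul_eq_mul, ← Finset.mul_sum]; ring

lemma TmapInv_Tmap {n : ℕ} {ϱ : ℝ} (h0 : ϱ ≠ 0) (h1 : (n : ℝ) - ϱ ≠ 0) (x : Fin n → ℝ) :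
    TmapInv n ϱ (Tmap n ϱ x) = x := by
  ext i
  simp only [TmapInv, Tmap, ← Finset.mul_sum, Finset.sum_sub_distrib, Finset.sum_const,
    Finset.card_univ, Fintype.card_fin, nsmul_eq_mul]
  field_simp
  ring

lemma TmapInv_comp_perm {n : ℕ} (ϱ : ℝ) (x : Fin n → ℝ) (σ : Equiv.Perm (Fin n)) :
    TmapInv n ϱ (x ∘ σ) = TmapInv n ϱ x ∘ σ := by
  ext i
  simp [TmapInv, Equiv.sum_comp σ x]

lemma TmapInv_one {n : ℕ} {ϱ : ℝ} (h1 : (n : ℝ) - ϱ ≠ 0) : TmapInv n ϱ 1 = 1 := by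
  ext i
  simp [TmapInv, h1]

lemma TmapInv_single {n : ℕ} (ϱ : ℝ) (j : Fin n) :
    TmapInv n ϱ (Pi.single j 1) = ((n : ℝ) - ϱ)⁻¹ • (1 - ϱ • Pi.single j 1 : Fin n → ℝ) := by
  ext i
  simp [TmapInv]

lemma rhoVec_comp_swap {n : ℕ} (hn : 1 ≤ n) (ϱ : ℝ) (j : Fin n) :
    rhoVec n ϱ ∘ Equiv.swap ⟨n - 1, by omega⟩ j = 1 - ϱ • Pi.single j 1 := by
  ext i
  have h : ((Equiv.swap (⟨n - 1, by omega⟩ : Fin n) j i : Fin n) : ℕ) = n - 1 ↔ i = j := by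
    refine (Fin.val_inj (b := ⟨n - 1, by omega⟩)).trans ?_
    rw [Equiv.swap_apply_eq_iff, Equiv.swap_apply_left]
  by_cases hij : i = j
  · subst hij; simp [rhoVec]
  · simp [rhoVec, h, hij]

/-- For admissible `(f, Γ)` and `ϱ ≠ 0` with `ϱ < ϱ_Γ`, the function
`f̃ = f ∘ T_ϱ⁻¹` on `Γ̃ = T_ϱ(Γ)` is smooth, symmetric, concave, and uniformly elliptic:
there is `θ > 0` with `∂f̃/∂λᵢ(λ) ≥ θ ∑ⱼ ∂f̃/∂λⱼ(λ) > 0` for all `λ ∈ Γ̃` and all `i`. -/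
theorem transformed_operator_uniformly_elliptic
    (n : ℕ) (hn : 1 ≤ n) (Γ : Set (Fin n → ℝ)) (hΓ : IsAdmissibleCone Γ)
    (f : (Fin n → ℝ) → ℝ) (hf : ContDiffOn ℝ (⊤ : ℕ∞) f Γ) (hsym : IsSymmetricOn f Γ)
    (hconc : ConcaveOn ℝ Γ f) (hstar : CondStar f Γ)
    (ϱΓ : ℝ) (hϱΓ : rhoVec n ϱΓ ∈ frontier Γ)
    (ϱ : ℝ) (hϱ0 : ϱ ≠ 0) (hϱ : ϱ < ϱΓ) :
    ContDiffOn ℝ (⊤ : ℕ∞) (f ∘ TmapInv n ϱ) (Tmap n ϱ '' Γ) ∧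
    IsSymmetricOn (f ∘ TmapInv n ϱ) (Tmap n ϱ '' Γ) ∧
    ConcaveOn ℝ (Tmap n ϱ '' Γ) (f ∘ TmapInv n ϱ) ∧
    ∃ θ : ℝ, 0 < θ ∧ ∀ lam ∈ Tmap n ϱ '' Γ,
      (0 < ∑ j : Fin n, partialDeriv (f ∘ TmapInv n ϱ) lam j) ∧
      ∀ i : Fin n, θ * ∑ j : Fin n, partialDeriv (f ∘ TmapInv n ϱ) lam j ≤
        partialDeriv (f ∘ TmapInv n ϱ) lam i := by
  have hmem := rhoVec_mem hΓ hϱΓ hϱ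
  obtain ⟨hopen, hconv, hcone, hperm, hpos, -⟩ := hΓ
  have hdiff : ∀ x ∈ Γ, DifferentiableAt ℝ f x := fun x hx =>
    (hf.contDiffAt (hopen.mem_nhds hx)).differentiableAt (by simp)
  have hone : (1 : Fin n → ℝ) ∈ Γ := hpos fun i => by simp
  have hD : ∀ x ∈ Γ, ∀ y ∈ Γ, 0 < fderiv ℝ f x y := fun x hx y hy =>
    fderiv_pos hcone hconc hstar hx hy (hdiff x hx)
  -- Openness leaves room to subtract a small multiple of `(1,…,1)`.
  obtain ⟨c, hc, hcΓ⟩ : ∃ c : ℝ, 0 < c ∧ rhoVec n ϱ - c • (1 : Fin n → ℝ) ∈ Γ := by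
    have hcont : Continuous fun c : ℝ => rhoVec n ϱ - c • (1 : Fin n → ℝ) := by fun_prop
    have h0 : ∀ᶠ c : ℝ in nhds 0, rhoVec n ϱ - c • (1 : Fin n → ℝ) ∈ Γ :=
      hcont.continuousAt.eventually (hopen.mem_nhds (by simpa using hmem))
    have h1 := (h0.filter_mono nhdsWithin_le_nhds).and
      (self_mem_nhdsWithin : Set.Ioi (0 : ℝ) ∈ nhdsWithin 0 (Set.Ioi 0))
    obtain ⟨c, h, hc⟩ := h1.exists
    exact ⟨c, hc, h⟩
  have hv : ∀ x ∈ Γ, ∀ j : Fin n,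
      c * fderiv ℝ f x 1 < fderiv ℝ f x (1 - ϱ • Pi.single j 1) := by
    intro x hx j
    have h := hD x hx _ (hperm _ hcΓ (Equiv.swap ⟨n - 1, by omega⟩ j))
    have he : (rhoVec n ϱ - c • (1 : Fin n → ℝ)) ∘ Equiv.swap ⟨n - 1, by omega⟩ j
        = (1 - ϱ • Pi.single j 1) - c • (1 : Fin n → ℝ) := by
      rw [← rhoVec_comp_swap hn]; rfl
    rw [he, map_sub, map_smul, smul_eq_mul] at h
    linarith
  -- The vectors `1 - ϱ eⱼ` add up to `(n - ϱ) • (1,…,1)`; comparing the values of the derivative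
  -- of `f` at `(1,…,1)` on both sides gives `ϱ < n`.
  have hnϱ : 0 < (n : ℝ) - ϱ := by
    have hp := hD 1 hone 1 hone
    have hsum : ∑ j : Fin n, (1 - ϱ • Pi.single j 1 : Fin n → ℝ) = ((n : ℝ) - ϱ) • 1 := by
      ext i
      simp [Finset.sum_apply, Pi.single_apply]
    have h : 0 < ∑ j : Fin n, fderiv ℝ f 1 (1 - ϱ • Pi.single j 1) :=
      Finset.sum_pos (fun j _ => (mul_pos hc hp).trans (hv 1 hone j)) ⟨⟨0, by omega⟩, by simp⟩
    rw [← map_sum, hsum, map_smul, smul_eq_mul] at h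
    exact pos_of_mul_pos_left h hp.le
  have hmaps : ∀ lam ∈ Tmap n ϱ '' Γ, TmapInv n ϱ lam ∈ Γ := by
    rintro _ ⟨x, hx, rfl⟩
    rwa [TmapInv_Tmap hϱ0 hnϱ.ne']
  refine ⟨?_, ?_, ?_, c / ((n : ℝ) - ϱ), div_pos hc hnϱ, ?_⟩
  · exact hf.comp (TmapInvCLM n ϱ).contDiff.contDiffOn hmaps
  · intro lam hlam σ
    simp only [Function.comp_apply]
    rw [TmapInv_comp_perm, hsym _ (hmaps lam hlam)]
  · exact (hconc.comp_linearMap (TmapInvCLM n ϱ).toLinearMap).subset hmaps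
      (hconv.is_linear_image (Tmap_isLinearMap n ϱ))
  · intro lam hlam
    have hx := hmaps lam hlam
    set x := TmapInv n ϱ lam with hxdef
    have hfd : fderiv ℝ (f ∘ TmapInv n ϱ) lam = (fderiv ℝ f x).comp (TmapInvCLM n ϱ) :=
      ((hdiff x hx).hasFDerivAt.comp lam (TmapInvCLM n ϱ).hasFDerivAt).fderiv
    have hsum : ∑ j : Fin n, partialDeriv (f ∘ TmapInv n ϱ) lam j = fderiv ℝ f x 1 := by
      simp only [partialDeriv]
      have h1 : ∑ j : Fin n, (Pi.single j 1 : Fin n → ℝ) = 1 :=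
        Finset.univ_sum_single (1 : Fin n → ℝ)
      rw [← map_sum, h1, hfd, ContinuousLinearMap.comp_apply, TmapInvCLM_apply, TmapInv_one hnϱ.ne']
    rw [hsum]
    refine ⟨hD x hx 1 hone, fun i => ?_⟩
    rw [partialDeriv, hfd, ContinuousLinearMap.comp_apply, TmapInvCLM_apply, TmapInv_single,
      map_smul, smul_eq_mul, div_eq_inv_mul, mul_assoc]
    exact mul_le_mul_of_nonneg_left (hv x hx i).le (inv_pos.2 hnϱ).le
end
end

section
/- Let Γ ⊂ ℝⁿ be an open symmetric convex cone as below. Then for every λ ∈ Γ and every choice of κ_Γ + 1 distinct indices 1 ≤ i₁ < i₂ < ⋯ < i_{κ_Γ+1} ≤ n, one has λ_{i₁} + λ_{i₂} + ⋯ + λ_{i_{κ_Γ+1}} > 0. -/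
/-!
Suppose some `lam ∈ Γ` has `∑ i ∈ s, lam i ≤ 0` with `#s = κ + 1`. Adding up the images of `lam`
under the powers of a cyclic permutation of `s` gives a point of `Γ` all of whose entries on `s`
equal this nonpositive sum. Since `Γ` is an open convex cone containing the positive orthant,
it is stable under increasing coordinates, so after raising the entries on `s` to `0`, raising
those off `s` to a common positive constant and rescaling, the vector `v` that is `0` on `s` and
`1` off `s` lies in `Γ`. If `κ + 1 < n`, a permutation of `v` is `zeroOneVec n (κ + 1)`,
contradicting the maximality of `κ`. If `κ + 1 = n`, then `v = 0`, and an open cone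
containing `0` is the whole space, contradicting `∂Γ ≠ ∅`.
-/


open Finset

noncomputable section

lemma cone_add_mem {n : ℕ} {Γ : Set (Fin n → ℝ)} (hΓ : IsAdmissibleCone Γ)
    {x y : Fin n → ℝ} (hx : x ∈ Γ) (hy : y ∈ Γ) : x + y ∈ Γ := by
  obtain ⟨-, hc, hs, -⟩ := hΓ
  have h := hs _ (hc hx hy (by norm_num : (0 : ℝ) ≤ 1 / 2) (by norm_num : (0 : ℝ) ≤ 1 / 2)
    (by norm_num)) 2 (by norm_num)
  convert h using 1
  ext i
  simp
  ring

lemma exists_pos_add_smul_mem {n : ℕ} {Γ : Set (Fin n → ℝ)} (ho : IsOpen Γ)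
    {x : Fin n → ℝ} (hx : x ∈ Γ) (w : Fin n → ℝ) : ∃ ε : ℝ, 0 < ε ∧ x + ε • w ∈ Γ := by
  have hcont : Continuous fun t : ℝ => x + t • w := by fun_prop
  have hev : ∀ᶠ t in nhds (0 : ℝ), x + t • w ∈ Γ :=
    hcont.continuousAt.eventually_mem (ho.mem_nhds (by simpa using hx))
  have hpos : ∀ᶠ t in nhdsWithin (0 : ℝ) (Set.Ioi 0), 0 < t := eventually_mem_nhdsWithin
  exact (hpos.and (hev.filter_mono nhdsWithin_le_nhds)).exists

lemma cone_mem_of_le {n : ℕ} {Γ : Set (Fin n → ℝ)} (hΓ : IsAdmissibleCone Γ)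
    {x y : Fin n → ℝ} (hx : x ∈ Γ) (hxy : ∀ i, x i ≤ y i) : y ∈ Γ := by
  -- Moving `x` slightly inside `Γ` makes the difference to `y` strictly positive.
  obtain ⟨ε, hε, hmem⟩ := exists_pos_add_smul_mem hΓ.1 hx (fun _ => -1)
  have hpos : y - (x + ε • fun _ => (-1 : ℝ)) ∈ Γ := by
    apply hΓ.2.2.2.2.1
    intro i
    have := hxy i
    simp
    linarith
  simpa using cone_add_mem hΓ hmem hpos

/-- The origin is not in the cone, since otherwise the cone is everything and has no boundary. -/
lemma zero_notMem_cone {n : ℕ} {Γ : Set (Fin n → ℝ)} (hΓ : IsAdmissibleCone Γ) :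
    (0 : Fin n → ℝ) ∉ Γ := by
  intro h0
  have huniv : Γ = Set.univ := by
    refine Set.eq_univ_of_forall fun y => ?_
    obtain ⟨ε, hε, hmem⟩ := exists_pos_add_smul_mem hΓ.1 h0 y
    have := hΓ.2.2.1 _ hmem ε⁻¹ (inv_pos.2 hε)
    simpa [smul_smul, hε.ne'] using this
  have hf := hΓ.2.2.2.2.2
  simp [huniv] at hf

/-- Symmetrizing over a cyclic permutation of `s` replaces every entry on `s` by the sum of
the entries on `s`. -/
lemma exists_mem_cone_eq_sum_on {n : ℕ} {Γ : Set (Fin n → ℝ)} (hΓ : IsAdmissibleCone Γ)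
    {lam : Fin n → ℝ} (hlam : lam ∈ Γ) {s : Finset (Fin n)} (hs : s.Nonempty) :
    ∃ x ∈ Γ, ∀ i ∈ s, x i = ∑ j ∈ s, lam j := by
  obtain ⟨σ, hσ, -⟩ := s.exists_cycleOn
  refine ⟨∑ k ∈ range s.card, lam ∘ ⇑(σ ^ k), ?_, fun i hi => ?_⟩
  · refine Finset.sum_induction_nonempty _ (· ∈ Γ) (fun _ _ => cone_add_mem hΓ)
      (by simpa using hs.ne_empty) fun k _ => hΓ.2.2.2.1 _ hlam _
  · have h := Finset.sum_mul_sum_eq_sum_perm hσ (Pi.single i (1 : ℝ)) lam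
    simpa [Finset.sum_apply, Pi.single_apply, hi] using h.symm

lemma indicator_mem_cone {n : ℕ} {Γ : Set (Fin n → ℝ)} (hΓ : IsAdmissibleCone Γ)
    {x : Fin n → ℝ} (hx : x ∈ Γ) {s : Finset (Fin n)} (hs : ∀ i ∈ s, x i ≤ 0) :
    (fun i => if i ∈ s then (0 : ℝ) else 1) ∈ Γ := by
  set M : ℝ := 1 + ∑ j, |x j|
  have hM : 0 < M := by positivity
  have h : (fun i => if i ∈ s then (0 : ℝ) else M) ∈ Γ := by
    refine cone_mem_of_le hΓ hx fun i => ?_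
    split_ifs with hi
    · exact hs i hi
    · have h1 := Finset.single_le_sum (fun j _ => abs_nonneg (x j)) (Finset.mem_univ i)
      have h2 := le_abs_self (x i)
      simp only [M]
      linarith
  convert hΓ.2.2.1 _ h M⁻¹ (inv_pos.2 hM) using 1
  ext i
  by_cases hi : i ∈ s <;> simp [hi, hM.ne']

lemma zeroOneVec_mem_of_indicator_mem {n : ℕ} {Γ : Set (Fin n → ℝ)} (hΓ : IsAdmissibleCone Γ)
    {s : Finset (Fin n)} (h : (fun i => if i ∈ s then (0 : ℝ) else 1) ∈ Γ) :
    zeroOneVec n s.card ∈ Γ := by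
  have hsn : s.card ≤ n := by simpa using s.card_le_univ
  have hcard : Fintype.card {i : Fin n // (i : ℕ) < s.card} = Fintype.card {i // i ∈ s} := by
    rw [Fintype.card_subtype, Fintype.card_coe, Fin.card_filter_val_lt, min_eq_right hsn]
  let e := Fintype.equivOfCardEq hcard
  convert hΓ.2.2.2.1 _ h e.extendSubtype using 1
  ext i
  by_cases hi : (i : ℕ) < s.card
  · simp [zeroOneVec, hi, e.extendSubtype_mem i hi]
  · simp [zeroOneVec, hi, e.extendSubtype_not_mem i hi]

/-- For every `λ ∈ Γ`, the sum of any `κ_Γ + 1` distinct entries of `λ`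
is positive. -/
theorem sum_of_kappa_succ_entries_pos
    (n : ℕ) (hn : 1 ≤ n) (Γ : Set (Fin n → ℝ)) (hΓ : IsAdmissibleCone Γ)
    (κ : ℕ) (hκ : IsGreatest {k : ℕ | k ≤ n - 1 ∧ zeroOneVec n k ∈ Γ} κ) :
    ∀ lam ∈ Γ, ∀ s : Finset (Fin n), s.card = κ + 1 → 0 < ∑ i ∈ s, lam i := by
  intro lam hlam s hs
  by_contra! hle
  have hne : s.Nonempty := Finset.card_pos.1 (by omega)
  obtain ⟨x, hx, hxs⟩ := exists_mem_cone_eq_sum_on hΓ hlam hne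
  have hv := indicator_mem_cone hΓ hx fun i hi => (hxs i hi).trans_le hle
  have hsn : s.card ≤ n := by simpa using s.card_le_univ
  rcases hsn.eq_or_lt with heq | hlt
  · have hsu : s = Finset.univ := Finset.eq_univ_of_card s (by simpa using heq)
    subst hsu
    refine zero_notMem_cone hΓ ?_
    convert hv using 1
    ext i
    simp
  · have hmem := zeroOneVec_mem_of_indicator_mem hΓ hv
    rw [hs] at hmem
    have := hκ.2 ⟨by omega, hmem⟩
    omega
end
end

section
/- Let Γ ⊂ ℝⁿ be an open symmetric convex cone as below with n ≥ 2, and suppose Γ is of type 1 (equivalently κ_Γ ≤ n−2). Let Γ_∞ ⊂ ℝ^{n−1} be the projection of Γ onto the first n−1 coordinates. Then Γ_∞ is an open symmetric convex cone in ℝ^{n−1} containing the positive orthant of ℝ^{n−1}, Γ_∞ ≠ ℝ^{n−1}, and moreover κ_{Γ_∞} = κ_Γ and ϱ_Γ ≤ ϱ_{Γ_∞}, where κ_{Γ_∞} and ϱ_{Γ_∞} are defined for Γ_∞ in ℝ^{n−1} in the same way as κ_Γ and ϱ_Γ are for Γ in ℝⁿ. -/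
/-!
Since `Γ` is an open convex cone containing the positive orthant, it is stable under adding
vectors with nonnegative coordinates (`IsAdmissibleCone.add_nonneg_mem`). Hence `0 ∈ Γ_∞` would put
a positive multiple of `(0,…,0,1)` into `Γ`, against type 1; so `0 ∉ Γ_∞` and `Γ_∞` is proper. The
same monotonicity lets the free last coordinate of a lift of `(0,…,0,1,…,1)` be taken equal to the
other nonzero entries, which gives `κ_{Γ_∞} = κ_Γ`.

For `ϱ`, the average of the vectors obtained from `(1,…,1,1-m)` by moving its last entry to every
position is `0`, so `(1,…,1,1-m) ∉ Γ_∞` (`rhoVec_card_notMem`), while `(1,…,1) ∈ Γ_∞`; by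
connectedness the line `ϱ ↦ (1,…,1,1-ϱ)` meets the boundary of `Γ_∞`, at some `ϱ_∞ > 0` because
the positive orthant lies in the open set `Γ_∞`. If `ϱ_∞ < ϱ_Γ`, then `(1,…,1,1-ϱ_∞) ∈ Γ`, being strictly between `(1,…,1) ∈ Γ` and a boundary
point of `Γ`; exchanging the last two coordinates and projecting would put
`(1,…,1,1-ϱ_∞)` into the open set `Γ_∞`, which is impossible.
-/

open Finset

noncomputable section

theorem IsAdmissibleCone.add_mem {n : ℕ} {Γ : Set (Fin n → ℝ)} (h : IsAdmissibleCone Γ)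
    {x y : Fin n → ℝ} (hx : x ∈ Γ) (hy : y ∈ Γ) : x + y ∈ Γ := by
  obtain ⟨-, hc, hs, -⟩ := h
  have h1 := hs _ (hc hx hy (a := 1 / 2) (b := 1 / 2) (by norm_num) (by norm_num) (by norm_num)) 2
    (by norm_num)
  convert h1 using 1
  rw [smul_add, smul_smul, smul_smul]
  norm_num

/-- An open convex cone containing the positive orthant is monotone: openness allows a small
multiple of `(1,…,1)` to be moved from `x` to `y`, which makes `y` strictly positive. -/
theorem IsAdmissibleCone.add_nonneg_mem {n : ℕ} {Γ : Set (Fin n → ℝ)} (h : IsAdmissibleCone Γ)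
    {x y : Fin n → ℝ} (hx : x ∈ Γ) (hy : ∀ i, 0 ≤ y i) : x + y ∈ Γ := by
  have hcont : Continuous fun ε : ℝ => x - ε • (fun _ => 1 : Fin n → ℝ) := by fun_prop
  have hev : ∀ᶠ ε in nhdsWithin (0 : ℝ) (Set.Ioi 0), x - ε • (fun _ => 1 : Fin n → ℝ) ∈ Γ :=
    nhdsWithin_le_nhds ((hcont.continuousAt (x := 0)).eventually_mem
      (h.1.mem_nhds (by simpa using hx)))
  obtain ⟨ε, hε, hε0⟩ := (hev.and self_mem_nhdsWithin).exists
  have hy' : y + ε • (fun _ => 1 : Fin n → ℝ) ∈ Γ := by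
    apply h.2.2.2.2.1
    intro i
    have := hy i
    have : 0 < ε := hε0
    simp only [Pi.add_apply, Pi.smul_apply, smul_eq_mul]
    linarith
  have := h.add_mem hε hy'
  convert this using 1
  abel

theorem IsAdmissibleCone.mem_of_le {n : ℕ} {Γ : Set (Fin n → ℝ)} (h : IsAdmissibleCone Γ)
    {x y : Fin n → ℝ} (hx : x ∈ Γ) (hxy : ∀ i, x i ≤ y i) : y ∈ Γ := by
  have := h.add_nonneg_mem hx (y := y - x) (fun i => by simpa using hxy i)
  simpa using this

/-- A symmetric convex set containing a vector contains the average of the vectors obtained by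
swapping its last entry with each entry; for `(1,…,1,1-m)` this average is `0`. -/
theorem rhoVec_card_notMem {m : ℕ} (hm : 1 ≤ m) {S : Set (Fin m → ℝ)} (hc : Convex ℝ S)
    (hsymm : ∀ x ∈ S, ∀ σ : Equiv.Perm (Fin m), x ∘ σ ∈ S) (h0 : (0 : Fin m → ℝ) ∉ S) :
    rhoVec m m ∉ S := by
  intro hx
  apply h0
  have hm0 : (m : ℝ) ≠ 0 := by positivity
  let l : Fin m := ⟨m - 1, by omega⟩
  have := hc.sum_mem (t := Finset.univ) (w := fun _ : Fin m => (m : ℝ)⁻¹)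
    (z := fun i => rhoVec m m ∘ Equiv.swap i l) (fun _ _ => by positivity)
    (by simp [hm0]) (fun i _ => hsymm _ hx _)
  convert this using 1
  funext j
  have key : ∀ i : Fin m, rhoVec m m (Equiv.swap i l j) = 1 - if i = j then (m : ℝ) else 0 := by
    intro i
    have h1 : ((Equiv.swap i l j : Fin m) : ℕ) = m - 1 ↔ i = j := by
      rw [show ((Equiv.swap i l j : Fin m) : ℕ) = m - 1 ↔ Equiv.swap i l j = l from
        (Fin.ext_iff (b := l)).symm, Equiv.swap_apply_eq_iff, Equiv.swap_apply_right, eq_comm]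
    simp only [rhoVec, h1]
    split_ifs <;> simp
  simp [Finset.sum_apply, key, ← Finset.mul_sum, Finset.sum_sub_distrib]

theorem continuous_snoc_left {m : ℕ} (t : ℝ) :
    Continuous fun y : Fin m → ℝ => (Fin.snoc y t : Fin (m + 1) → ℝ) := by
  refine continuous_pi fun i => ?_
  refine Fin.lastCases ?_ (fun j => ?_) i
  · simpa using continuous_const
  · simpa using continuous_apply j

/-- Extension of a permutation of the first `m` coordinates fixing the last one. -/
def extendPerm {m : ℕ} (σ : Equiv.Perm (Fin m)) : Equiv.Perm (Fin (m + 1)) :=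
  (finSuccEquivLast.trans (Equiv.optionCongr σ)).trans finSuccEquivLast.symm

theorem snoc_comp_extendPerm {m : ℕ} (σ : Equiv.Perm (Fin m)) (y : Fin m → ℝ) (t : ℝ) :
    (Fin.snoc y t : Fin (m + 1) → ℝ) ∘ extendPerm σ = Fin.snoc (y ∘ σ) t := by
  funext i
  refine Fin.lastCases ?_ (fun j => ?_) i
  · simp [extendPerm]
  · simp [extendPerm]

/-- Let `n = m + 1 ≥ 2` and let `Γ ⊂ ℝⁿ` be a type 1 admissible cone.
Then its projection `Γ_∞ ⊂ ℝ^{n-1}` onto the first `n-1` coordinates is an open symmetric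
convex cone containing the positive orthant, `Γ_∞ ≠ ℝ^{n-1}`, and `κ_{Γ_∞} = κ_Γ`,
`ϱ_Γ ≤ ϱ_{Γ_∞}`. -/
theorem projection_cone_properties
    (m : ℕ) (hm : 1 ≤ m) (Γ : Set (Fin (m + 1) → ℝ)) (hΓ : IsAdmissibleCone Γ)
    (htype1 : eLast (m + 1) ∈ frontier Γ)
    (κ : ℕ) (hκ : IsGreatest {k : ℕ | k ≤ (m + 1) - 1 ∧ zeroOneVec (m + 1) k ∈ Γ} κ)
    (ϱΓ : ℝ) (hϱΓ : rhoVec (m + 1) ϱΓ ∈ frontier Γ)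
    (Γinf : Set (Fin m → ℝ)) (hΓinf : Γinf = {y : Fin m → ℝ | ∃ t : ℝ, Fin.snoc y t ∈ Γ}) :
    IsOpen Γinf ∧
    (∀ x ∈ Γinf, ∀ σ : Equiv.Perm (Fin m), x ∘ σ ∈ Γinf) ∧
    Convex ℝ Γinf ∧
    (∀ x ∈ Γinf, ∀ t : ℝ, 0 < t → t • x ∈ Γinf) ∧
    {x : Fin m → ℝ | ∀ i, 0 < x i} ⊆ Γinf ∧
    Γinf ≠ Set.univ ∧
    IsGreatest {k : ℕ | k ≤ m - 1 ∧ zeroOneVec m k ∈ Γinf} κ ∧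
    (∃ ϱinf : ℝ, rhoVec m ϱinf ∈ frontier Γinf ∧ ϱΓ ≤ ϱinf) := by
  have hΓ' := hΓ
  obtain ⟨hopen, hconv, hscale, hsymm, hpos, -⟩ := hΓ'
  have hlast : eLast (m + 1) ∉ Γ := fun h => by
    rw [hopen.frontier_eq] at htype1
    exact htype1.2 h
  have iopen : IsOpen Γinf := by
    have : Γinf = ⋃ t : ℝ, (fun y : Fin m → ℝ => (Fin.snoc y t : Fin (m + 1) → ℝ)) ⁻¹' Γ := by
      ext y; simp [hΓinf]
    rw [this]
    exact isOpen_iUnion fun t => hopen.preimage (continuous_snoc_left t)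
  have mem_iff : ∀ y, y ∈ Γinf ↔ ∃ t : ℝ, (Fin.snoc y t : Fin (m + 1) → ℝ) ∈ Γ := by
    intro y; rw [hΓinf]; rfl
  have isymm : ∀ x ∈ Γinf, ∀ σ : Equiv.Perm (Fin m), x ∘ σ ∈ Γinf := by
    intro x hx σ
    obtain ⟨t, ht⟩ := (mem_iff x).1 hx
    refine (mem_iff _).2 ⟨t, ?_⟩
    rw [← snoc_comp_extendPerm]
    exact hsymm _ ht _
  have iconv : Convex ℝ Γinf := by
    intro x hx y hy a b ha hb hab
    obtain ⟨t, ht⟩ := (mem_iff x).1 hx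
    obtain ⟨s, hs⟩ := (mem_iff y).1 hy
    refine (mem_iff _).2 ⟨a * t + b * s, ?_⟩
    convert hconv ht hs ha hb hab using 1
    funext i
    refine Fin.lastCases ?_ (fun j => ?_) i <;> simp
  have iscale : ∀ x ∈ Γinf, ∀ t : ℝ, 0 < t → t • x ∈ Γinf := by
    intro x hx r hr
    obtain ⟨t, ht⟩ := (mem_iff x).1 hx
    refine (mem_iff _).2 ⟨r * t, ?_⟩
    convert hscale _ ht r hr using 1
    funext i
    refine Fin.lastCases ?_ (fun j => ?_) i <;> simp
  have ipos : {x : Fin m → ℝ | ∀ i, 0 < x i} ⊆ Γinf := by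
    intro x hx
    refine (mem_iff _).2 ⟨1, hpos fun i => ?_⟩
    refine Fin.lastCases ?_ (fun j => ?_) i
    · simp
    · simpa using hx j
  have izero : (0 : Fin m → ℝ) ∉ Γinf := by
    intro h
    obtain ⟨t, ht⟩ := (mem_iff _).1 h
    apply hlast
    have hT : (0 : ℝ) < |t| + 1 := by positivity
    -- The lift `(0,…,0,t)` is dominated by the positive multiple `(|t|+1) • (0,…,0,1)`.
    have h1 : (|t| + 1) • eLast (m + 1) ∈ Γ := by
      refine hΓ.mem_of_le ht fun i => ?_
      refine Fin.lastCases ?_ (fun j => ?_) i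
      · simp only [Fin.snoc_last, eLast, Pi.smul_apply, Fin.val_last, smul_eq_mul]
        simp
        linarith [le_abs_self t]
      · simp [eLast, j.2.ne]
    have h2 := hscale _ h1 _ (inv_pos.2 hT)
    rwa [smul_smul, inv_mul_cancel₀ hT.ne', one_smul] at h2
  refine ⟨iopen, isymm, iconv, iscale, ipos, ?_, ?_, ?_⟩
  · intro h
    exact izero (h ▸ Set.mem_univ _)
  · obtain ⟨⟨hκ1, hκ2⟩, hκ3⟩ := hκ
    -- `κ = m` would mean `(0,…,0,1) ∈ Γ`.
    have hκm : κ ≠ m := by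
      rintro rfl
      apply hlast
      convert hκ2 using 1
      funext i
      have := i.2
      simp only [eLast, zeroOneVec]
      split_ifs <;> first | rfl | omega
    refine ⟨⟨by omega, (mem_iff _).2 ⟨1, ?_⟩⟩, ?_⟩
    · convert hκ2 using 1
      funext i
      refine Fin.lastCases ?_ (fun j => ?_) i
      · simp [zeroOneVec]
        omega
      · simp [zeroOneVec]
    · rintro k ⟨hk, hk2⟩
      obtain ⟨t, ht⟩ := (mem_iff _).1 hk2
      refine hκ3 ⟨by omega, ?_⟩
      have hT : (0 : ℝ) < |t| + 1 := by positivity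
      have h1 : (|t| + 1) • zeroOneVec (m + 1) k ∈ Γ := by
        refine hΓ.mem_of_le ht fun i => ?_
        refine Fin.lastCases ?_ (fun j => ?_) i
        · have : ¬ m < k := by omega
          simp only [Fin.snoc_last, zeroOneVec, Pi.smul_apply, Fin.val_last, smul_eq_mul, this]
          simp
          linarith [le_abs_self t]
        · simp only [Fin.snoc_castSucc, zeroOneVec, Pi.smul_apply, Fin.val_castSucc, smul_eq_mul]
          split_ifs <;> simp
      have h2 := hscale _ h1 _ (inv_pos.2 hT)
      rwa [smul_smul, inv_mul_cancel₀ hT.ne', one_smul] at h2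
  · have hrcont : Continuous (rhoVec m) := by
      refine continuous_pi fun i => ?_
      simp only [rhoVec]
      split_ifs <;> fun_prop
    have hrpos : ∀ r : ℝ, r ≤ 0 → rhoVec m r ∈ Γinf := by
      intro r hr
      apply ipos
      intro i
      simp only [rhoVec]
      split_ifs <;> linarith
    obtain ⟨ϱinf, hϱ⟩ := (nonempty_frontier_iff (s := rhoVec m ⁻¹' Γinf)).2
      ⟨⟨0, hrpos 0 le_rfl⟩, (Set.ne_univ_iff_exists_notMem _).2
        ⟨(m : ℝ), rhoVec_card_notMem hm iconv isymm izero⟩⟩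
    have hfr : rhoVec m ϱinf ∈ frontier Γinf := hrcont.frontier_preimage_subset _ hϱ
    refine ⟨ϱinf, hfr, ?_⟩
    have hnot : rhoVec m ϱinf ∉ Γinf := by
      rw [iopen.frontier_eq] at hfr
      exact hfr.2
    have hr0 : 0 < ϱinf := by
      by_contra hle
      exact hnot (hrpos _ (not_lt.1 hle))
    by_contra! hlt
    have hone : rhoVec (m + 1) 0 ∈ interior Γ := by
      rw [hopen.interior_eq]
      apply hpos
      intro i
      simp [rhoVec]
    -- `(1,…,1,1-ϱinf)` lies strictly between `(1,…,1) ∈ Γ` and the boundary point at `ϱΓ`.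
    have hmem : rhoVec (m + 1) ϱinf ∈ Γ := by
      apply interior_subset
      refine hconv.openSegment_interior_closure_subset_interior hone
        (frontier_subset_closure hϱΓ) ?_
      have hϱ : 0 < ϱΓ := hr0.trans hlt
      refine ⟨1 - ϱinf / ϱΓ, ϱinf / ϱΓ, ?_, by positivity, by ring, ?_⟩
      · rw [sub_pos, div_lt_one hϱ]
        exact hlt
      · funext i
        simp only [rhoVec, Pi.add_apply, Pi.smul_apply, smul_eq_mul]
        split_ifs
        · field_simp
          ring
        · ring
    apply hnot
    refine (mem_iff _).2 ⟨1, ?_⟩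
    let l : Fin (m + 1) := ⟨m - 1, by omega⟩
    convert hsymm _ hmem (Equiv.swap l (Fin.last m)) using 1
    funext i
    refine Fin.lastCases ?_ (fun j => ?_) i
    · simp only [Fin.snoc_last, Function.comp, Equiv.swap_apply_right, rhoVec, l]
      rw [if_neg (by omega)]
    · simp only [Fin.snoc_castSucc, Function.comp, rhoVec]
      by_cases hj : (j : ℕ) = m - 1
      · have : j.castSucc = l := Fin.ext hj
        simp [this, hj]
      · have hne : j.castSucc ≠ l := fun h => hj (congrArg Fin.val h)
        rw [Equiv.swap_apply_of_ne_of_ne hne (Fin.castSucc_lt_last j).ne]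
        simp [hj, j.2.ne]
end
end

section
/- Let Γ ⊂ ℝⁿ be an open symmetric convex cone as below, let ϱ < 0 be a real constant, and let Γ̃ be the image of Γ under the linear map T_ϱ. Then Γ̃ is of type 2, i.e. (0,…,0,1) ∈ Γ̃, and ϱ_{Γ̃} = ϱ_Γ + ϱ_Γ(n−ϱ_Γ)/(ϱ_Γ−ϱ), where ϱ_{Γ̃} is the real number with (1,…,1,1−ϱ_{Γ̃}) ∈ ∂Γ̃. -/
/-!
For `ϱ < 0` the map `T_ϱ` is a linear homeomorphism of `ℝⁿ` with inverse `TmapInv n ϱ`, so it carries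
`∂Γ` to `∂(T_ϱ Γ)`. Both claims come from computing single values of these maps:
`TmapInv n ϱ (0,…,0,1) = (n-ϱ)⁻¹ (1,…,1,1-ϱ)` lies in the positive orthant, hence in `Γ`, and
`T_ϱ (1,…,1,1-ϱ_Γ)` is the multiple of `(1,…,1,1-ϱ_{Γ̃})` by `(ϱ - ϱ_Γ)/ϱ`. This factor is positive
because `ϱ_Γ ≥ 1` (otherwise `(1,…,1,1-ϱ_Γ)` would be an interior point of `Γ`), and `∂Γ` is
invariant under positive dilations.
-/

open Finset

noncomputable section

/-- Both `TmapInv n ϱ` and `Tmap n ϱ` preserve the coordinate sum, which is why they are mutually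
inverse. -/
lemma sum_TmapInv (n : ℕ) {ϱ : ℝ} (h : (n : ℝ) - ϱ ≠ 0) (x : Fin n → ℝ) :
    ∑ i, TmapInv n ϱ x i = ∑ i, x i := by
  simp only [TmapInv, ← Finset.mul_sum, Finset.sum_sub_distrib, Finset.sum_const,
    Finset.card_univ, Fintype.card_fin, nsmul_eq_mul]
  field_simp

lemma sum_Tmap (n : ℕ) {ϱ : ℝ} (h : ϱ ≠ 0) (x : Fin n → ℝ) :
    ∑ i, Tmap n ϱ x i = ∑ i, x i := by
  simp only [Tmap, ← Finset.mul_sum, Finset.sum_sub_distrib, Finset.sum_const,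
    Finset.card_univ, Fintype.card_fin, nsmul_eq_mul]
  field_simp
  ring

/-- `T_ϱ` as a homeomorphism of `ℝⁿ`. -/
def TmapHomeo (n : ℕ) {ϱ : ℝ} (h0 : ϱ ≠ 0) (h : (n : ℝ) - ϱ ≠ 0) :
    (Fin n → ℝ) ≃ₜ (Fin n → ℝ) where
  toFun := Tmap n ϱ
  invFun := TmapInv n ϱ
  left_inv x := by
    funext i
    rw [TmapInv, sum_Tmap n h0, Tmap]
    field_simp
    ring
  right_inv x := by
    funext i
    rw [Tmap, sum_TmapInv n h, TmapInv]
    field_simp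
    ring
  continuous_toFun := by unfold Tmap; fun_prop
  continuous_invFun := by unfold TmapInv; fun_prop

lemma smul_mem_frontier_of_cone {n : ℕ} {Γ : Set (Fin n → ℝ)}
    (hc : ∀ x ∈ Γ, ∀ t : ℝ, 0 < t → t • x ∈ Γ) {x : Fin n → ℝ} (hx : x ∈ frontier Γ)
    {t : ℝ} (ht : 0 < t) : t • x ∈ frontier Γ := by
  have him : (Homeomorph.smulOfNeZero t ht.ne') '' Γ = Γ := by
    ext y
    constructor
    · rintro ⟨z, hz, rfl⟩
      exact hc z hz t ht
    · intro hy
      exact ⟨t⁻¹ • y, hc y hy _ (inv_pos.2 ht), smul_inv_smul₀ ht.ne' y⟩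
  have h := (Homeomorph.smulOfNeZero (α := Fin n → ℝ) t ht.ne').image_frontier Γ
  rw [him] at h
  rw [← h]
  exact ⟨x, hx, rfl⟩

lemma val_eq_pred_iff {n : ℕ} (hn : 1 ≤ n) (i : Fin n) :
    (i : ℕ) = n - 1 ↔ i = ⟨n - 1, by omega⟩ := by
  rw [Fin.ext_iff]

lemma sum_eLast {n : ℕ} (hn : 1 ≤ n) : ∑ i, eLast n i = 1 := by
  simp only [eLast, val_eq_pred_iff hn]
  simp

lemma sum_rhoVec {n : ℕ} (hn : 1 ≤ n) (r : ℝ) : ∑ i, rhoVec n r i = n - r := by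
  have h : ∀ i, rhoVec n r i = 1 - r * eLast n i := by
    intro i
    unfold rhoVec eLast
    split_ifs <;> ring
  simp only [h, Finset.sum_sub_distrib, ← Finset.mul_sum, sum_eLast hn]
  simp

/-- For `ϱ < 0`, the image cone `Γ̃ = T_ϱ(Γ)` is of type 2 and
`ϱ_{Γ̃} = ϱ_Γ + ϱ_Γ (n - ϱ_Γ)/(ϱ_Γ - ϱ)`. -/
theorem image_cone_rho_of_neg
    (n : ℕ) (hn : 1 ≤ n) (Γ : Set (Fin n → ℝ)) (hΓ : IsAdmissibleCone Γ)
    (ϱΓ : ℝ) (hϱΓ : rhoVec n ϱΓ ∈ frontier Γ)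
    (ϱ : ℝ) (hϱ : ϱ < 0) :
    eLast n ∈ Tmap n ϱ '' Γ ∧
    rhoVec n (ϱΓ + ϱΓ * ((n : ℝ) - ϱΓ) / (ϱΓ - ϱ)) ∈ frontier (Tmap n ϱ '' Γ) := by
  obtain ⟨ho, -, hc, -, hpos, -⟩ := hΓ
  have hnϱ : 0 < (n : ℝ) - ϱ := by
    have : (0 : ℝ) ≤ n := Nat.cast_nonneg n
    linarith
  have h1 : 1 ≤ ϱΓ := by
    by_contra! hlt
    have hin : rhoVec n ϱΓ ∈ Γ := hpos fun i => by
      unfold rhoVec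
      split_ifs <;> linarith
    rw [ho.frontier_eq] at hϱΓ
    exact hϱΓ.2 hin
  constructor
  · refine ⟨TmapInv n ϱ (eLast n), hpos fun i => ?_,
      (TmapHomeo n hϱ.ne hnϱ.ne').right_inv _⟩
    rw [TmapInv, sum_eLast hn]
    apply mul_pos (inv_pos.2 hnϱ)
    unfold eLast
    split_ifs <;> linarith
  · have hd : 0 < ϱΓ - ϱ := by linarith
    have hfr := (TmapHomeo n hϱ.ne hnϱ.ne').image_frontier Γ
    have hcoe : ⇑(TmapHomeo n hϱ.ne hnϱ.ne') = Tmap n ϱ := rfl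
    rw [hcoe] at hfr
    rw [← hfr]
    refine ⟨(ϱ / (ϱ - ϱΓ)) • rhoVec n ϱΓ, smul_mem_frontier_of_cone hc hϱΓ
      (div_pos_of_neg_of_neg hϱ (by linarith)), ?_⟩
    funext i
    have hd2 := hd.ne'
    have hϱ0 := hϱ.ne
    simp only [Tmap, Pi.smul_apply, smul_eq_mul, ← Finset.mul_sum, sum_rhoVec hn]
    unfold rhoVec
    -- Expose the denominator that occurs in the goal, so that `field_simp` can clear it.
    have hneg : ϱ - ϱΓ = -(ϱΓ - ϱ) := by ring
    rw [hneg]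
    split_ifs <;> field_simp <;> ring
end
end
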